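/- For every positive integer n, \(\overline{M}(n) = \sum_{d\mid n} \varphi(d) \sum_{\substack{\delta \mid n\\ \gcd(\delta,d)=1}} \mu(\delta) \sum_{\substack{j=1\\ \delta j \equiv 1 \ (\mathrm{mod}\ d)}}^{n/\delta} f\left(\left\lfloor \frac{n}{j\delta}\right\rfloor\right)\), where \(\varphi\) is Euler's totient function and \(\mu\) is the Möbius function. -/

import Mathlib

open Finset ArithmeticFunction

/-- `f m` is the number of nonempty subsets `A` of `{1, 2, ..., m}` whose elements are
relatively prime, i.e. the gcd of the elements of `A` is `1`. -/
def f (m : ℕ) : ℕ :=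
  ((Finset.Icc 1 m).powerset.filter (fun A => A.Nonempty ∧ A.gcd _root_.id = 1)).card

/-- `Mbar n = ∑ ((A) - 1, n)`, summed over all nonempty subsets `A` of `{1, 2, ..., n}`
such that the gcd `(A)` of the elements of `A` is relatively prime to `n`. -/
def Mbar (n : ℕ) : ℕ :=
  ∑ A ∈ (Finset.Icc 1 n).powerset.filter
      (fun A => A.Nonempty ∧ Nat.gcd (A.gcd _root_.id) n = 1),
    Nat.gcd (A.gcd _root_.id - 1) n

theorem card_filter_gcd_eq (n g : ℕ) (hg : 0 < g) :
    ((Finset.Icc 1 n).powerset.filter (fun A => A.Nonempty ∧ A.gcd _root_.id = g)).card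
      = f (n / g) := by
  unfold f
  symm
  have hgcd (B : Finset ℕ) : (B.image (g * ·)).gcd _root_.id = g * B.gcd _root_.id := by
    rw [Finset.gcd_image]
    exact Finset.gcd_mul_left.trans (by rw [normalize_eq]; rfl)
  refine Finset.card_bij (fun B _ => B.image (g * ·)) ?_ ?_ ?_
  · intro B hB
    simp only [Finset.mem_filter, Finset.mem_powerset] at hB ⊢
    obtain ⟨hB, hne, h1⟩ := hB
    refine ⟨?_, hne.image _, by rw [hgcd, h1, mul_one]⟩
    intro x hx
    obtain ⟨b, hb, rfl⟩ := Finset.mem_image.1 hx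
    have hb' := Finset.mem_Icc.1 (hB hb)
    refine Finset.mem_Icc.2 ⟨Nat.mul_pos hg hb'.1, ?_⟩
    exact (Nat.mul_le_mul_left g hb'.2).trans (Nat.mul_div_le n g)
  · intro B _ C _ h
    exact Finset.image_injective (fun a b h => Nat.eq_of_mul_eq_mul_left hg h) h
  · intro A hA
    simp only [Finset.mem_filter, Finset.mem_powerset] at hA
    obtain ⟨hA, hne, h1⟩ := hA
    have hdvd : ∀ a ∈ A, g ∣ a := fun a ha => h1 ▸ Finset.gcd_dvd (f := _root_.id) ha
    have himg : (A.image (· / g)).image (g * ·) = A := by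
      rw [Finset.image_image]
      conv_rhs => rw [← Finset.image_id (s := A)]
      exact Finset.image_congr fun a ha => Nat.mul_div_cancel' (hdvd a ha)
    refine ⟨A.image (· / g), ?_, himg⟩
    simp only [Finset.mem_filter, Finset.mem_powerset]
    refine ⟨?_, hne.image _, ?_⟩
    · intro x hx
      obtain ⟨a, ha, rfl⟩ := Finset.mem_image.1 hx
      have ha' := Finset.mem_Icc.1 (hA ha)
      exact Finset.mem_Icc.2 ⟨Nat.div_pos (Nat.le_of_dvd ha'.1 (hdvd a ha)) hg,
        Nat.div_le_div_right ha'.2⟩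
    · have h := hgcd (A.image (· / g))
      rw [himg, h1] at h
      exact Nat.eq_of_mul_eq_mul_left hg (by rw [← h, mul_one])

theorem Mbar_eq_sum_gcd (n : ℕ) :
    Mbar n = ∑ g ∈ (Finset.Icc 1 n).filter (fun g => Nat.gcd g n = 1),
      Nat.gcd (g - 1) n * f (n / g) := by
  unfold Mbar
  rw [← Finset.sum_fiberwise_of_maps_to (g := fun A : Finset ℕ => A.gcd _root_.id)
    (t := (Finset.Icc 1 n).filter (fun g => Nat.gcd g n = 1))]
  · refine Finset.sum_congr rfl fun g hg => ?_
    simp only [Finset.mem_filter, Finset.mem_Icc] at hg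
    rw [← card_filter_gcd_eq n g hg.1.1, Finset.filter_filter, mul_comm, ← smul_eq_mul,
      ← Finset.sum_const]
    refine Finset.sum_congr ?_ ?_
    · ext A
      simp only [Finset.mem_filter]
      constructor
      · rintro ⟨h, ⟨h1, -⟩, h2⟩
        exact ⟨h, h1, h2⟩
      · rintro ⟨h, h1, h2⟩
        exact ⟨h, ⟨h1, h2 ▸ hg.2⟩, h2⟩
    · intro A hA
      rw [(Finset.mem_filter.1 hA).2.2]
  · intro A hA
    simp only [Finset.mem_filter, Finset.mem_powerset] at hA
    obtain ⟨hA, ⟨a, ha⟩, h1⟩ := hA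
    have ha' := Finset.mem_Icc.1 (hA ha)
    have hd : A.gcd _root_.id ∣ a := Finset.gcd_dvd (f := _root_.id) ha
    exact Finset.mem_filter.2 ⟨Finset.mem_Icc.2
      ⟨Nat.pos_of_dvd_of_pos hd ha'.1, (Nat.le_of_dvd ha'.1 hd).trans ha'.2⟩, h1⟩

theorem divisors_gcd_eq_filter (m n : ℕ) (hn : 0 < n) :
    (Nat.gcd m n).divisors = n.divisors.filter (· ∣ m) := by
  ext d
  simp [Nat.dvd_gcd_iff, hn.ne', and_comm]

theorem sum_mul_Icc_div (n δ : ℕ) (hδ : 0 < δ) (p : ℕ → Prop) [DecidablePred p] (F : ℕ → ℤ) :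
    ∑ j ∈ (Finset.Icc 1 (n / δ)).filter (fun j => p (δ * j)), F (j * δ)
      = ∑ g ∈ (Finset.Icc 1 n).filter (fun g => δ ∣ g ∧ p g), F g := by
  refine Finset.sum_bij (fun j _ => j * δ) ?_ ?_ ?_ fun _ _ => rfl
  · intro j hj
    simp only [Finset.mem_filter, Finset.mem_Icc] at hj ⊢
    exact ⟨⟨Nat.mul_pos hj.1.1 hδ, (Nat.le_div_iff_mul_le hδ).1 hj.1.2⟩,
      Dvd.intro_left j rfl, mul_comm δ j ▸ hj.2⟩
  · intro a _ b _ h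
    exact Nat.eq_of_mul_eq_mul_right hδ h
  · intro g hg
    simp only [Finset.mem_filter, Finset.mem_Icc] at hg
    obtain ⟨⟨h1, h2⟩, ⟨j, rfl⟩, hp⟩ := hg
    refine ⟨j, ?_, mul_comm _ _⟩
    simp only [Finset.mem_filter, Finset.mem_Icc]
    exact ⟨⟨Nat.pos_of_mul_pos_left h1, (Nat.le_div_iff_mul_le hδ).2 (mul_comm δ j ▸ h2)⟩, hp⟩

theorem dvd_sub_one_iff_mod_eq {d g : ℕ} (hg : 1 ≤ g) : d ∣ g - 1 ↔ g % d = 1 % d :=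
  (Nat.modEq_iff_dvd' hg).symm.trans eq_comm

theorem coprime_of_dvd_of_mod_eq_one {d δ g : ℕ} (hδ : δ ∣ g) (h : g % d = 1 % d) :
    Nat.gcd δ d = 1 := by
  have hgd : Nat.gcd g d = 1 := by
    have h' : Nat.gcd g d = Nat.gcd 1 d := Nat.ModEq.gcd_eq h
    simpa using h'
  exact Nat.Coprime.coprime_dvd_left hδ hgd

theorem sum_moebius_dvd (g n : ℕ) (hn : 0 < n) :
    ∑ δ ∈ n.divisors, (if δ ∣ g then moebius δ else 0) = if Nat.gcd g n = 1 then 1 else 0 := by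
  rw [← Finset.sum_filter, ← divisors_gcd_eq_filter g n hn, ← coe_mul_zeta_apply,
    moebius_mul_coe_zeta, one_apply]

theorem sum_totient_dvd (m n : ℕ) (hn : 0 < n) :
    ∑ d ∈ n.divisors, (if d ∣ m then (Nat.totient d : ℤ) else 0) = Nat.gcd m n := by
  rw [← Finset.sum_filter, ← divisors_gcd_eq_filter m n hn, ← Nat.cast_sum, Nat.sum_totient]

theorem Mbar_eq (n : ℕ) (hn : 0 < n) :
    (Mbar n : ℤ) = ∑ d ∈ n.divisors, (Nat.totient d : ℤ) *
      ∑ δ ∈ n.divisors.filter (fun δ => Nat.gcd δ d = 1), (moebius δ) *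
        ∑ j ∈ (Finset.Icc 1 (n / δ)).filter (fun j => δ * j % d = 1 % d),
          (f (n / (j * δ)) : ℤ) := by
  have inner (d : ℕ) :
      ∑ δ ∈ n.divisors.filter (fun δ => Nat.gcd δ d = 1), (moebius δ) *
        ∑ j ∈ (Finset.Icc 1 (n / δ)).filter (fun j => δ * j % d = 1 % d),
          (f (n / (j * δ)) : ℤ)
      = ∑ g ∈ Finset.Icc 1 n, (if d ∣ g - 1 then 1 else 0) *
          ((if Nat.gcd g n = 1 then 1 else 0) * (f (n / g) : ℤ)) := by
    calc
      _ = ∑ δ ∈ n.divisors.filter (fun δ => Nat.gcd δ d = 1), (moebius δ) *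
            ∑ g ∈ (Finset.Icc 1 n).filter (fun g => δ ∣ g ∧ g % d = 1 % d),
              (f (n / g) : ℤ) := by
        refine Finset.sum_congr rfl fun δ hδ => ?_
        rw [sum_mul_Icc_div n δ (Nat.pos_of_mem_divisors (Finset.mem_filter.1 hδ).1)
          (fun g => g % d = 1 % d) (fun g => (f (n / g) : ℤ))]
      _ = ∑ δ ∈ n.divisors, (moebius δ) *
            ∑ g ∈ (Finset.Icc 1 n).filter (fun g => δ ∣ g ∧ g % d = 1 % d),
              (f (n / g) : ℤ) := by
        refine Finset.sum_filter_of_ne fun δ _ h => ?_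
        obtain ⟨g, hg, -⟩ := Finset.exists_ne_zero_of_sum_ne_zero (right_ne_zero_of_mul h)
        have hg' := (Finset.mem_filter.1 hg).2
        exact coprime_of_dvd_of_mod_eq_one hg'.1 hg'.2
      _ = ∑ δ ∈ n.divisors, ∑ g ∈ Finset.Icc 1 n, (if d ∣ g - 1 then 1 else 0) *
            ((if δ ∣ g then moebius δ else 0) * (f (n / g) : ℤ)) := by
        refine Finset.sum_congr rfl fun δ _ => ?_
        rw [Finset.sum_filter, Finset.mul_sum]
        refine Finset.sum_congr rfl fun g hg => ?_
        simp only [dvd_sub_one_iff_mod_eq (Finset.mem_Icc.1 hg).1]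
        split_ifs <;> simp_all
      _ = _ := by
        rw [Finset.sum_comm]
        simp only [← Finset.mul_sum, ← Finset.sum_mul, sum_moebius_dvd _ n hn]
  simp only [inner]
  simp only [Finset.mul_sum]
  rw [Finset.sum_comm, Mbar_eq_sum_gcd, Nat.cast_sum, Finset.sum_filter]
  refine Finset.sum_congr rfl fun g _ => ?_
  split_ifs
  · rw [Nat.cast_mul, ← sum_totient_dvd _ n hn, Finset.sum_mul]
    simp
  · simp
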